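/- For any ε' > 0, P-almost surely, for all sufficiently large integers j one has j^{2−ε'} ≤ b⁺(j) < d⁺(j) ≤ j^{2+ε'} and j^{2−ε'} ≤ |b⁻(j)| < |d⁻(j)| ≤ j^{2+ε'}. -/

import Mathlib

open MeasureTheory ProbabilityTheory Filter Set

/-- `d⁺(j) := min{n ≥ 0 : V(n) ≥ j}` for a potential `v : ℤ → ℝ`. -/
noncomputable def dPlus (v : ℤ → ℝ) (j : ℝ) : ℕ := sInf {n : ℕ | j ≤ v n}

/-- `b⁺(j) := min{n ≥ 0 : V(n) = min_{0 ≤ x ≤ d⁺(j)} V(x)}`. -/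
noncomputable def bPlus (v : ℤ → ℝ) (j : ℝ) : ℕ :=
  sInf {n : ℕ | ∀ m : ℕ, m ≤ dPlus v j → v n ≤ v m}

/-- `|d⁻(j)|`, where `d⁻(j) := max{n ≤ 0 : V(n) ≥ j}`. -/
noncomputable def dMinusAbs (v : ℤ → ℝ) (j : ℝ) : ℕ := sInf {m : ℕ | j ≤ v (-(m : ℤ))}

/-- `|b⁻(j)|`, where `b⁻(j) := max{n ≤ 0 : V(n) = min_{d⁻(j) ≤ x ≤ 0} V(x)}`. -/
noncomputable def bMinusAbs (v : ℤ → ℝ) (j : ℝ) : ℕ :=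
  sInf {m : ℕ | ∀ k : ℕ, k ≤ dMinusAbs v j → v (-(m : ℤ)) ≤ v (-(k : ℤ))}

/-!
Read outwards from the origin, either half of the potential is a walk `S` with independent,
centred, bounded increments. Stop `S` when it leaves an interval: optional stopping for `S` and for
`S² - ∑ 𝔼[Xᵢ²]` bounds, for `1 ≤ t ≤ J`, the probabilities that `S` stays below `J` up to time
`J² t⁴`, that `|S|` reaches `J / t` before time `J² / t⁴`, and that `S` reaches `J` before
`-J / t`, each by a multiple of `1 / t`. Outside these events `J² / t⁴ ≤ b(J) < d(J) ≤ J² t⁴`.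
With `t = J ^ η` the bounds are summable over `J = 2 ^ k`, so Borel–Cantelli gives the claim along
powers of two, and the monotonicity of `b` and `d` in `J` extends it to all large `J`.
-/

section Path

variable {Ω : Type*} {X : ℕ → Ω → ℝ} {a b : ℝ} {n N : ℕ} {ω : Ω}

/-- The random walk with increments `X`, started at `0`. -/
def partialSum (X : ℕ → Ω → ℝ) (n : ℕ) (ω : Ω) : ℝ := ∑ i ∈ Finset.range n, X i ω

@[simp] lemma partialSum_zero (X : ℕ → Ω → ℝ) (ω : Ω) : partialSum X 0 ω = 0 :=
  Finset.sum_range_zero _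

lemma partialSum_succ (X : ℕ → Ω → ℝ) (n : ℕ) (ω : Ω) :
    partialSum X (n + 1) ω = partialSum X n ω + X n ω :=
  Finset.sum_range_succ _ _

/-- The exit time of the random walk with increments `X` from `Ioo (-a) b`, capped at `N`: it is `N`
if the walk stays in the interval up to time `N`. -/
noncomputable def exitTime (X : ℕ → Ω → ℝ) (a b : ℝ) (N : ℕ) (ω : Ω) : ℕ :=
  hittingBtwn (partialSum X) (Ioo (-a) b)ᶜ 0 N ω

lemma exitTime_le (X : ℕ → Ω → ℝ) (a b : ℝ) (N : ℕ) (ω : Ω) : exitTime X a b N ω ≤ N :=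
  hittingBtwn_le ω

lemma partialSum_mem_Ioo_of_lt_exitTime (h : n < exitTime X a b N ω) :
    partialSum X n ω ∈ Ioo (-a) b :=
  not_notMem.1 (notMem_of_lt_hittingBtwn h n.zero_le)

lemma exitTime_le_of_notMem (hn : n ≤ N) (h : partialSum X n ω ∉ Ioo (-a) b) :
    exitTime X a b N ω ≤ n :=
  hittingBtwn_le_of_mem n.zero_le hn h

lemma partialSum_exitTime_notMem (hn : n ≤ N) (h : partialSum X n ω ∉ Ioo (-a) b) :
    partialSum X (exitTime X a b N ω) ω ∉ Ioo (-a) b :=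
  hittingBtwn_mem_set (s := (Ioo (-a) b)ᶜ) ⟨n, ⟨n.zero_le, hn⟩, h⟩

lemma exitTime_eq_of_forall_mem (h : ∀ n ≤ N, partialSum X n ω ∈ Ioo (-a) b) :
    exitTime X a b N ω = N := by
  refine (exitTime_le X a b N ω).antisymm (not_lt.1 fun hlt => ?_)
  exact hittingBtwn_mem_set_of_hittingBtwn_lt hlt (h _ hlt.le)

end Path

/-! ### Optional stopping -/

section OptionalStopping

variable {Ω : Type*} [mΩ : MeasurableSpace Ω] {μ : Measure Ω}

lemma integral_stoppedAt_eq_integral_zero [IsFiniteMeasure μ] {𝒢 : Filtration ℕ mΩ}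
    {f : ℕ → Ω → ℝ} {τ : Ω → ℕ} {N : ℕ}
    (hf : Martingale f 𝒢 μ) (hτ : IsStoppingTime 𝒢 (fun ω => (τ ω : WithTop ℕ)))
    (hle : ∀ ω, τ ω ≤ N) : ∫ ω, f (τ ω) ω ∂μ = ∫ ω, f 0 ω ∂μ := by
  have hle' : ∀ ω, (τ ω : WithTop ℕ) ≤ N := fun ω => WithTop.coe_le_coe.2 (hle ω)
  calc ∫ ω, f (τ ω) ω ∂μ
      = ∫ ω, (μ[f N | hτ.measurableSpace]) ω ∂μ :=
        integral_congr_ae (hf.stoppedValue_ae_eq_condExp_of_le_const hτ hle')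
    _ = ∫ ω, f N ω ∂μ := integral_condExp (hτ.measurableSpace_le)
    _ = ∫ ω, f 0 ω ∂μ := by simpa using (hf.setIntegral_eq (Nat.zero_le N) MeasurableSet.univ).symm

variable {X : ℕ → Ω → ℝ} {n k : ℕ}

/-- The filtration whose `n`-th σ-algebra is generated by `X k` for `k < n`; unlike the natural
filtration it makes `partialSum X` adapted with `X n` independent of the past. -/
def strictPast (X : ℕ → Ω → ℝ) (hX : ∀ i, Measurable (X i)) : Filtration ℕ mΩ where
  seq n := ⨆ k ∈ Iio n, MeasurableSpace.comap (X k) inferInstance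
  mono' _ _ hmn := biSup_mono fun _ hk => lt_of_lt_of_le hk hmn
  le' _ := iSup₂_le fun k _ => (hX k).comap_le

lemma measurable_strictPast (hX : ∀ i, Measurable (X i)) (hkn : k < n) :
    Measurable[strictPast X hX n] (X k) :=
  Measurable.of_comap_le
    (le_biSup (fun k => MeasurableSpace.comap (X k) inferInstance) (mem_Iio.2 hkn))

lemma stronglyAdapted_partialSum (hX : ∀ i, Measurable (X i)) :
    StronglyAdapted (strictPast X hX) (partialSum X) := fun _ =>
  (Finset.measurable_sum _ fun _ hk =>
    measurable_strictPast hX (Finset.mem_range.1 hk)).stronglyMeasurable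

lemma condExp_comp_strictPast (hX : ∀ i, Measurable (X i)) (hind : iIndepFun X μ) {g : ℝ → ℝ}
    (hg : Measurable g) (n : ℕ) :
    μ[fun ω => g (X n ω) | strictPast X hX n] =ᵐ[μ] fun _ => ∫ ω, g (X n ω) ∂μ := by
  have := hind.isProbabilityMeasure
  have hindep : Indep (⨆ k ∈ ({n} : Set ℕ), MeasurableSpace.comap (X k) inferInstance)
      (strictPast X hX n) μ :=
    indep_iSup_of_disjoint (fun k => (hX k).comap_le) hind (by simp)
  rw [iSup_singleton] at hindep
  exact condExp_indep_eq (hX n).comap_le ((strictPast X hX).le n)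
    (hg.comp (comap_measurable (X n))).stronglyMeasurable hindep

lemma integrable_partialSum (hint : ∀ i, Integrable (X i) μ) (n : ℕ) :
    Integrable (partialSum X n) μ :=
  integrable_finsetSum _ fun i _ => hint i

lemma martingale_partialSum (hX : ∀ i, Measurable (X i)) (hind : iIndepFun X μ)
    (hint : ∀ i, Integrable (X i) μ) (hmean : ∀ i, ∫ ω, X i ω ∂μ = 0) :
    Martingale (partialSum X) (strictPast X hX) μ := by
  have := hind.isProbabilityMeasure
  refine martingale_of_condExp_sub_eq_zero_nat (stronglyAdapted_partialSum hX)
    (integrable_partialSum hint) fun n => ?_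
  have hstep : partialSum X (n + 1) - partialSum X n = X n := by
    ext ω
    simp [partialSum_succ]
  rw [hstep]
  filter_upwards [condExp_comp_strictPast hX hind measurable_id n] with ω hω
  simpa [hmean] using hω

lemma memLp_partialSum (hL2 : ∀ i, MemLp (X i) 2 μ) (n : ℕ) : MemLp (partialSum X n) 2 μ :=
  memLp_finsetSum _ fun i _ => hL2 i

lemma condExp_partialSum_mul_strictPast (hX : ∀ i, Measurable (X i)) (hind : iIndepFun X μ)
    (hL2 : ∀ i, MemLp (X i) 2 μ) (hmean : ∀ i, ∫ ω, X i ω ∂μ = 0) (n : ℕ) :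
    μ[partialSum X n * X n | strictPast X hX n] =ᵐ[μ] 0 := by
  have := hind.isProbabilityMeasure
  have hint : Integrable (partialSum X n * X n) μ :=
    (memLp_partialSum hL2 n).integrable_mul (hL2 n)
  filter_upwards [condExp_mul_of_stronglyMeasurable_left (stronglyAdapted_partialSum hX n) hint
    ((hL2 n).integrable one_le_two), condExp_comp_strictPast hX hind measurable_id n]
    with ω hpull hω
  have hzero : (μ[X n | strictPast X hX n]) ω = 0 := hω.trans (hmean n)
  rw [hpull, Pi.mul_apply, hzero, mul_zero, Pi.zero_apply]

lemma martingale_sq_partialSum_sub (hX : ∀ i, Measurable (X i)) (hind : iIndepFun X μ)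
    (hL2 : ∀ i, MemLp (X i) 2 μ) (hmean : ∀ i, ∫ ω, X i ω ∂μ = 0) :
    Martingale (fun n ω => partialSum X n ω ^ 2 - ∑ i ∈ Finset.range n, ∫ ω, X i ω ^ 2 ∂μ)
      (strictPast X hX) μ := by
  have := hind.isProbabilityMeasure
  refine martingale_of_condExp_sub_eq_zero_nat
    (fun n => ((stronglyAdapted_partialSum hX n).pow 2).sub stronglyMeasurable_const)
    (fun n => (memLp_partialSum hL2 n).integrable_sq.sub (integrable_const _)) fun n => ?_
  set c := ∫ ω, X n ω ^ 2 ∂μ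
  have hsq : Integrable (fun ω => X n ω ^ 2) μ := (hL2 n).integrable_sq
  have hcross : Integrable ((2 : ℝ) • (partialSum X n * X n)) μ :=
    ((memLp_partialSum hL2 n).integrable_mul (hL2 n)).smul 2
  have hstep : ((fun ω => partialSum X (n + 1) ω ^ 2
        - ∑ i ∈ Finset.range (n + 1), ∫ ω, X i ω ^ 2 ∂μ)
      - fun ω => partialSum X n ω ^ 2 - ∑ i ∈ Finset.range n, ∫ ω, X i ω ^ 2 ∂μ)
      = (2 : ℝ) • (partialSum X n * X n) + ((fun ω => X n ω ^ 2) - fun _ => c) := by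
    ext ω
    simp only [c, partialSum_succ, Finset.sum_range_succ, Pi.sub_apply, Pi.add_apply, Pi.smul_apply,
      Pi.mul_apply, smul_eq_mul]
    ring
  rw [hstep]
  filter_upwards [condExp_add hcross (hsq.sub (integrable_const c)) (strictPast X hX n),
    condExp_smul (2 : ℝ) (partialSum X n * X n) (strictPast X hX n),
    condExp_partialSum_mul_strictPast hX hind hL2 hmean n,
    condExp_sub hsq (integrable_const c) (strictPast X hX n),
    condExp_comp_strictPast hX hind (g := fun x => x ^ 2) (by fun_prop) n]
    with ω hadd hsmul hmul hsub hcond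
  rw [hadd, Pi.add_apply, hsmul, Pi.smul_apply, hmul, hsub, Pi.sub_apply, hcond,
    condExp_const ((strictPast X hX).le n)]
  simp [c]

lemma integral_partialSum_stoppingTime {τ : Ω → ℕ} {N : ℕ}
    (hX : ∀ i, Measurable (X i)) (hind : iIndepFun X μ)
    (hint : ∀ i, Integrable (X i) μ) (hmean : ∀ i, ∫ ω, X i ω ∂μ = 0)
    (hτ : IsStoppingTime (strictPast X hX) (fun ω => (τ ω : WithTop ℕ))) (hle : ∀ ω, τ ω ≤ N) :
    ∫ ω, partialSum X (τ ω) ω ∂μ = 0 := by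
  have := hind.isProbabilityMeasure
  rw [integral_stoppedAt_eq_integral_zero (martingale_partialSum hX hind hint hmean) hτ hle]
  simp

lemma integrable_sum_range_stoppingTime [IsFiniteMeasure μ] {𝒢 : Filtration ℕ mΩ} {τ : Ω → ℕ}
    {N : ℕ} (hτ : IsStoppingTime 𝒢 (fun ω => (τ ω : WithTop ℕ))) (hle : ∀ ω, τ ω ≤ N) (c : ℕ → ℝ) :
    Integrable (fun ω => ∑ i ∈ Finset.range (τ ω), c i) μ :=
  integrable_stoppedValue ℕ (u := fun n _ => ∑ i ∈ Finset.range n, c i) hτ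
    (fun _ => integrable_const _) fun ω => WithTop.coe_le_coe.2 (hle ω)

lemma integral_sq_partialSum_stoppingTime {τ : Ω → ℕ} {N : ℕ}
    (hX : ∀ i, Measurable (X i)) (hind : iIndepFun X μ)
    (hL2 : ∀ i, MemLp (X i) 2 μ) (hmean : ∀ i, ∫ ω, X i ω ∂μ = 0)
    (hτ : IsStoppingTime (strictPast X hX) (fun ω => (τ ω : WithTop ℕ))) (hle : ∀ ω, τ ω ≤ N) :
    ∫ ω, partialSum X (τ ω) ω ^ 2 ∂μ = ∫ ω, ∑ i ∈ Finset.range (τ ω), ∫ ω', X i ω' ^ 2 ∂μ ∂μ := by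
  have := hind.isProbabilityMeasure
  have hsq : Integrable (fun ω => partialSum X (τ ω) ω ^ 2) μ :=
    (memLp_stoppedValue hτ (memLp_partialSum hL2)
      fun ω => WithTop.coe_le_coe.2 (hle ω)).integrable_sq
  have hmart := integral_stoppedAt_eq_integral_zero
    (martingale_sq_partialSum_sub hX hind hL2 hmean) hτ hle
  rw [integral_sub hsq (integrable_sum_range_stoppingTime hτ hle _)] at hmart
  simpa [sub_eq_zero] using hmart

lemma measureReal_le_of_integral_eq_zero [IsProbabilityMeasure μ] {Y : Ω → ℝ} {b c : ℝ}
    (hb : 0 < b) (hc : 0 ≤ c) (hY : Integrable Y μ) (hmean : ∫ ω, Y ω ∂μ = 0)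
    (hlow : ∀ᵐ ω ∂μ, -c ≤ Y ω) : μ.real {ω | b ≤ Y ω} ≤ c / b := by
  have hnonneg : 0 ≤ᵐ[μ] fun ω => Y ω + c := by
    filter_upwards [hlow] with ω hω
    exact neg_le_iff_add_nonneg.1 hω
  have hmarkov := mul_meas_ge_le_integral_of_nonneg hnonneg (hY.add (integrable_const c)) (b + c)
  rw [integral_add hY (integrable_const c), hmean] at hmarkov
  simp only [add_le_add_iff_right, integral_const, probReal_univ, one_smul, zero_add] at hmarkov
  rw [le_div_iff₀' hb]
  exact (mul_le_mul_of_nonneg_right (le_add_of_nonneg_right hc) measureReal_nonneg).trans hmarkov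

end OptionalStopping

/-! ### Exit of a centred walk from an interval -/

section Exit

variable {Ω : Type*} [mΩ : MeasurableSpace Ω] {μ : Measure Ω} {X : ℕ → Ω → ℝ} {a b : ℝ} {N : ℕ}

lemma isStoppingTime_exitTime (hX : ∀ i, Measurable (X i)) :
    IsStoppingTime (strictPast X hX) (fun ω => (exitTime X a b N ω : WithTop ℕ)) :=
  (stronglyAdapted_partialSum hX).adapted.isStoppingTime_hittingBtwn measurableSet_Ioo.compl

/-- `X` is a sequence of independent centred random variables, bounded by `C` almost surely and with
second moments at least `v`. -/
structure IsCenteredIncrements (X : ℕ → Ω → ℝ) (v C : ℝ) (μ : Measure Ω) : Prop where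
  measurable : ∀ i, Measurable (X i)
  iIndepFun : iIndepFun X μ
  integral_eq_zero : ∀ i, ∫ ω, X i ω ∂μ = 0
  ae_abs_le : ∀ i, ∀ᵐ ω ∂μ, |X i ω| ≤ C
  le_integral_sq : ∀ i, v ≤ ∫ ω, X i ω ^ 2 ∂μ

namespace IsCenteredIncrements

variable {v C : ℝ}

lemma memLp (hX : IsCenteredIncrements X v C μ) (p : ENNReal) (i : ℕ) : MemLp (X i) p μ :=
  have := hX.iIndepFun.isProbabilityMeasure
  MemLp.of_bound (hX.measurable i).aestronglyMeasurable C (hX.ae_abs_le i)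

lemma nonneg_bound (hX : IsCenteredIncrements X v C μ) : 0 ≤ C := by
  have := hX.iIndepFun.isProbabilityMeasure
  obtain ⟨ω, hω⟩ := (hX.ae_abs_le 0).exists
  exact (abs_nonneg _).trans hω

lemma integral_sq_le (hX : IsCenteredIncrements X v C μ) (i : ℕ) : ∫ ω, X i ω ^ 2 ∂μ ≤ C ^ 2 := by
  have := hX.iIndepFun.isProbabilityMeasure
  refine (convex_Iic (C ^ 2)).integral_mem isClosed_Iic ?_ (hX.memLp 2 i).integrable_sq
  filter_upwards [hX.ae_abs_le i] with ω hω
  exact sq_le_sq' (abs_le.1 hω).1 (abs_le.1 hω).2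

lemma integral_partialSum_exitTime (hX : IsCenteredIncrements X v C μ) (a b : ℝ) (N : ℕ) :
    ∫ ω, partialSum X (exitTime X a b N ω) ω ∂μ = 0 :=
  integral_partialSum_stoppingTime hX.measurable hX.iIndepFun
    (fun i => memLp_one_iff_integrable.1 (hX.memLp 1 i)) hX.integral_eq_zero
    (isStoppingTime_exitTime hX.measurable) (exitTime_le X a b N)

lemma integral_sq_partialSum_exitTime (hX : IsCenteredIncrements X v C μ) (a b : ℝ) (N : ℕ) :
    ∫ ω, partialSum X (exitTime X a b N ω) ω ^ 2 ∂μ =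
      ∫ ω, ∑ i ∈ Finset.range (exitTime X a b N ω), ∫ ω', X i ω' ^ 2 ∂μ ∂μ :=
  integral_sq_partialSum_stoppingTime hX.measurable hX.iIndepFun (hX.memLp 2) hX.integral_eq_zero
    (isStoppingTime_exitTime hX.measurable) (exitTime_le X a b N)

lemma memLp_partialSum_exitTime (hX : IsCenteredIncrements X v C μ) (a b : ℝ) (N : ℕ) :
    MemLp (fun ω => partialSum X (exitTime X a b N ω) ω) 2 μ :=
  memLp_stoppedValue (isStoppingTime_exitTime hX.measurable) (memLp_partialSum (hX.memLp 2))
    fun ω => WithTop.coe_le_coe.2 (exitTime_le X a b N ω)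

lemma ae_partialSum_exitTime_mem (hX : IsCenteredIncrements X v C μ) (ha : 0 < a) (hb : 0 < b)
    (N : ℕ) :
    ∀ᵐ ω ∂μ, partialSum X (exitTime X a b N ω) ω ∈ Icc (-(a + C)) (b + C) := by
  filter_upwards [ae_all_iff.2 hX.ae_abs_le] with ω hω
  rcases hτ : exitTime X a b N ω with _ | k
  · have := hX.nonneg_bound
    rw [partialSum_zero]
    constructor <;> linarith
  · obtain ⟨hlo, hhi⟩ := partialSum_mem_Ioo_of_lt_exitTime (hτ ▸ k.lt_succ_self :
      k < exitTime X a b N ω)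
    obtain ⟨hlo', hhi'⟩ := abs_le.1 (hω k)
    rw [partialSum_succ]
    constructor <;> linarith

lemma measureReal_le_partialSum_exitTime (hX : IsCenteredIncrements X v C μ) (ha : 0 < a)
    (hb : 0 < b) (N : ℕ) :
    μ.real {ω | b ≤ partialSum X (exitTime X a b N ω) ω} ≤ (a + C) / b := by
  have := hX.iIndepFun.isProbabilityMeasure
  refine measureReal_le_of_integral_eq_zero hb (add_nonneg ha.le hX.nonneg_bound)
    ((hX.memLp_partialSum_exitTime a b N).integrable one_le_two)
    (hX.integral_partialSum_exitTime a b N) ?_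
  filter_upwards [hX.ae_partialSum_exitTime_mem ha hb N] with ω hω using hω.1

lemma measureReal_partialSum_exitTime_le (hX : IsCenteredIncrements X v C μ) (ha : 0 < a)
    (hb : 0 < b) (N : ℕ) :
    μ.real {ω | partialSum X (exitTime X a b N ω) ω ≤ -a} ≤ (b + C) / a := by
  have := hX.iIndepFun.isProbabilityMeasure
  simp only [le_neg (b := a)]
  refine measureReal_le_of_integral_eq_zero ha (add_nonneg hb.le hX.nonneg_bound)
    ((hX.memLp_partialSum_exitTime a b N).integrable one_le_two).neg
    (by rw [integral_neg, hX.integral_partialSum_exitTime, neg_zero]) ?_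
  filter_upwards [hX.ae_partialSum_exitTime_mem ha hb N] with ω hω using neg_le_neg hω.2

lemma measureReal_forall_mem_Ioo_le (hX : IsCenteredIncrements X v C μ) (ha : 0 < a)
    (hb : 0 < b) (hv : 0 < v) (hN : 0 < N) :
    μ.real {ω | ∀ n ≤ N, partialSum X n ω ∈ Ioo (-a) b} ≤ (max a b + C) ^ 2 / (N * v) := by
  have := hX.iIndepFun.isProbabilityMeasure
  let Q : Ω → ℝ := fun ω => ∑ i ∈ Finset.range (exitTime X a b N ω), ∫ ω', X i ω' ^ 2 ∂μ
  have hQint : Integrable Q μ := integrable_sum_range_stoppingTime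
    (isStoppingTime_exitTime hX.measurable) (exitTime_le X a b N) _
  have hQnonneg : 0 ≤ Q := fun ω =>
    Finset.sum_nonneg fun i _ => integral_nonneg fun ω' => sq_nonneg _
  have hQle : ∫ ω, Q ω ∂μ ≤ (max a b + C) ^ 2 := by
    rw [← hX.integral_sq_partialSum_exitTime]
    refine (convex_Iic ((max a b + C) ^ 2)).integral_mem isClosed_Iic ?_
      (hX.memLp_partialSum_exitTime a b N).integrable_sq
    filter_upwards [hX.ae_partialSum_exitTime_mem ha hb N] with ω ⟨hlo, hhi⟩
    exact mem_Iic.2 (sq_le_sq' (by linarith [le_max_left a b]) (by linarith [le_max_right a b]))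
  have hsub : {ω | ∀ n ≤ N, partialSum X n ω ∈ Ioo (-a) b} ⊆ {ω | N * v ≤ Q ω} := by
    intro ω hω
    simpa [Q, exitTime_eq_of_forall_mem hω] using
      Finset.card_nsmul_le_sum (Finset.range N) _ v fun i _ => hX.le_integral_sq i
  rw [le_div_iff₀' (by positivity)]
  exact (mul_le_mul_of_nonneg_left (measureReal_mono hsub) (by positivity)).trans
    ((mul_meas_ge_le_integral_of_nonneg (.of_forall hQnonneg) hQint _).trans hQle)

lemma measureReal_forall_lt_le (hX : IsCenteredIncrements X v C μ) (ha : 0 < a)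
    (hb : 0 < b) (hv : 0 < v) (hN : 0 < N) :
    μ.real {ω | ∀ n ≤ N, partialSum X n ω < b} ≤
      (max a b + C) ^ 2 / (N * v) + (b + C) / a := by
  have := hX.iIndepFun.isProbabilityMeasure
  refine le_trans ?_ ((measureReal_union_le _ _).trans
    (add_le_add (hX.measureReal_forall_mem_Ioo_le ha hb hv hN)
      (hX.measureReal_partialSum_exitTime_le ha hb N)))
  refine measureReal_mono fun ω hω => or_iff_not_imp_left.2 fun hexit => ?_
  simp only [mem_ofPred_eq, not_forall] at hω hexit ⊢
  obtain ⟨n, hn, hnotMem⟩ := hexit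
  by_contra! hlow
  exact partialSum_exitTime_notMem hn hnotMem ⟨hlow, hω _ (exitTime_le X a b N ω)⟩

lemma measureReal_exists_le_and_forall_lt_le (hX : IsCenteredIncrements X v C μ) (ha : 0 < a)
    (hb : 0 < b) (N : ℕ) :
    μ.real {ω | ∃ n ≤ N, b ≤ partialSum X n ω ∧ ∀ m ≤ n, -a < partialSum X m ω} ≤
      (a + C) / b := by
  have := hX.iIndepFun.isProbabilityMeasure
  refine (measureReal_mono ?_).trans (hX.measureReal_le_partialSum_exitTime ha hb N)
  rintro ω ⟨n, hn, hreach, hlow⟩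
  have hnotMem : partialSum X n ω ∉ Ioo (-a) b := fun h => hreach.not_gt h.2
  refine not_lt.1 fun hlt => partialSum_exitTime_notMem hn hnotMem ⟨?_, hlt⟩
  exact hlow _ (exitTime_le_of_notMem hn hnotMem)

lemma measureReal_exists_le_abs_le (hX : IsCenteredIncrements X v C μ) (ha : 0 < a) (N : ℕ) :
    μ.real {ω | ∃ n ≤ N, a ≤ |partialSum X n ω|} ≤ N * C ^ 2 / a ^ 2 := by
  have := hX.iIndepFun.isProbabilityMeasure
  have hsub : {ω | ∃ n ≤ N, a ≤ |partialSum X n ω|} ⊆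
      {ω | a ^ 2 ≤ partialSum X (exitTime X a a N ω) ω ^ 2} := by
    rintro ω ⟨n, hn, hfar⟩
    have hnotMem : partialSum X n ω ∉ Ioo (-a) a := fun h => hfar.not_gt (abs_lt.2 h)
    have hexit := partialSum_exitTime_notMem hn hnotMem
    rw [mem_Ioo, ← abs_lt, not_lt] at hexit
    simpa using pow_le_pow_left₀ ha.le hexit 2
  have hsq : ∫ ω, partialSum X (exitTime X a a N ω) ω ^ 2 ∂μ ≤ N * C ^ 2 := by
    rw [hX.integral_sq_partialSum_exitTime]
    refine (convex_Iic _).integral_mem isClosed_Iic (.of_forall fun ω => ?_)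
      (integrable_sum_range_stoppingTime (isStoppingTime_exitTime hX.measurable)
        (exitTime_le X a a N) _)
    calc ∑ i ∈ Finset.range (exitTime X a a N ω), ∫ ω', X i ω' ^ 2 ∂μ
        ≤ (exitTime X a a N ω : ℝ) * C ^ 2 := by
          simpa using Finset.sum_le_card_nsmul (Finset.range (exitTime X a a N ω)) _ _
            fun i _ => hX.integral_sq_le i
      _ ≤ N * C ^ 2 := by gcongr; exact exitTime_le X a a N ω
  rw [le_div_iff₀' (by positivity)]
  exact (mul_le_mul_of_nonneg_left (measureReal_mono hsub) (by positivity)).trans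
    ((mul_meas_ge_le_integral_of_nonneg (.of_forall fun _ => sq_nonneg _)
      (hX.memLp_partialSum_exitTime a a N).integrable_sq _).trans hsq)

end IsCenteredIncrements

end Exit

/-! ### Valleys of a sequence -/

section Valleys

/-- The first time at which `s` reaches the level `j`, as `d⁺(j)` for the potential on the right
half line; it is `0` if `j` is never reached. -/
noncomputable def firstPassage {α : Type*} [LE α] (s : ℕ → α) (j : α) : ℕ := sInf {n | j ≤ s n}

/-- The first time at which `s` attains its minimum up to `firstPassage s j`, as `b⁺(j)` for the
potential on the right half line. -/
noncomputable def valleyBottom {α : Type*} [LE α] (s : ℕ → α) (j : α) : ℕ :=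
  sInf {n | ∀ m, m ≤ firstPassage s j → s n ≤ s m}

section LinearOrder

variable {α : Type*} [LinearOrder α] {s : ℕ → α} {i j : α} {m n : ℕ}

lemma firstPassage_le (h : j ≤ s n) : firstPassage s j ≤ n := Nat.sInf_le h

lemma le_apply_firstPassage (h : ∃ n, j ≤ s n) : j ≤ s (firstPassage s j) := Nat.sInf_mem h

lemma exists_le_of_firstPassage_pos (h : 0 < firstPassage s j) : ∃ n, j ≤ s n :=
  Nat.nonempty_of_pos_sInf h

lemma firstPassage_mono (hij : i ≤ j) (hj : ∃ n, j ≤ s n) : firstPassage s i ≤ firstPassage s j :=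
  firstPassage_le (hij.trans (le_apply_firstPassage hj))

lemma exists_le_firstPassage_forall_apply_le (s : ℕ → α) (j : α) :
    ∃ n ≤ firstPassage s j, ∀ m ≤ firstPassage s j, s n ≤ s m := by
  simpa [Nat.lt_succ_iff] using
    Finset.exists_min_image (Finset.range (firstPassage s j + 1)) s ⟨0, by simp⟩

lemma apply_valleyBottom_le (h : m ≤ firstPassage s j) : s (valleyBottom s j) ≤ s m :=
  have ⟨n, _, hn⟩ := exists_le_firstPassage_forall_apply_le s j
  Nat.sInf_mem (s := {n | ∀ m ≤ firstPassage s j, s n ≤ s m}) ⟨n, hn⟩ m h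

lemma valleyBottom_le_firstPassage (s : ℕ → α) (j : α) : valleyBottom s j ≤ firstPassage s j :=
  have ⟨_, hnd, hn⟩ := exists_le_firstPassage_forall_apply_le s j
  (Nat.sInf_le (s := {n | ∀ m ≤ firstPassage s j, s n ≤ s m}) hn).trans hnd

lemma apply_valleyBottom_lt (h : n < valleyBottom s j) : s (valleyBottom s j) < s n := by
  have hnotMem := Nat.notMem_of_lt_sInf h
  simp only [mem_ofPred_eq, not_forall, not_le] at hnotMem
  obtain ⟨m, hm, hlt⟩ := hnotMem
  exact (apply_valleyBottom_le hm).trans_lt hlt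

lemma valleyBottom_mono (hij : i ≤ j) (hj : ∃ n, j ≤ s n) : valleyBottom s i ≤ valleyBottom s j :=
  not_lt.1 fun hlt => (apply_valleyBottom_lt hlt).not_ge <|
    apply_valleyBottom_le ((valleyBottom_le_firstPassage s i).trans (firstPassage_mono hij hj))

lemma valleyBottom_lt_firstPassage (h0 : s 0 < j) (hj : ∃ n, j ≤ s n) :
    valleyBottom s j < firstPassage s j := by
  refine (valleyBottom_le_firstPassage s j).lt_of_ne fun heq => h0.not_ge ?_
  calc j ≤ s (firstPassage s j) := le_apply_firstPassage hj
    _ = s (valleyBottom s j) := by rw [heq]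
    _ ≤ s 0 := apply_valleyBottom_le (Nat.zero_le _)

end LinearOrder

/-- The bottom and the right end of the valley of depth `j` of `s` lie in `[lo, hi]`. The strict
inequality forces `s` to reach `j`, excluding the junk value `firstPassage s j = 0`. -/
def ValleyWithin (s : ℕ → ℝ) (j lo hi : ℝ) : Prop :=
  lo ≤ valleyBottom s j ∧ valleyBottom s j < firstPassage s j ∧ firstPassage s j ≤ hi

variable {s : ℕ → ℝ} {i j k lo hi lo' hi' : ℝ}

lemma valleyWithin_between (hi_valley : ValleyWithin s i lo hi') (hk : ValleyWithin s k lo' hi)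
    (hij : i ≤ j) (hjk : j ≤ k) (h0 : s 0 < j) : ValleyWithin s j lo hi := by
  obtain ⟨hlo, -, -⟩ := hi_valley
  obtain ⟨-, hlt, hhi⟩ := hk
  have hk_reached : ∃ n, k ≤ s n := exists_le_of_firstPassage_pos (Nat.zero_lt_of_lt hlt)
  have hj_reached : ∃ n, j ≤ s n := hk_reached.imp fun _ => hjk.trans
  refine ⟨hlo.trans ?_, valleyBottom_lt_firstPassage h0 hj_reached, le_trans ?_ hhi⟩
  · exact_mod_cast valleyBottom_mono hij hj_reached
  · exact_mod_cast firstPassage_mono hjk hk_reached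

lemma valleyWithin_of_path {a : ℝ} (hhi : 0 ≤ hi) (h0 : s 0 < j) (hreach : ∃ n ≤ ⌊hi⌋₊, j ≤ s n)
    (hslow : ∀ n ≤ ⌊lo⌋₊, |s n| < a)
    (hdeep : ∀ n ≤ ⌊hi⌋₊, j ≤ s n → ∃ m ≤ n, s m ≤ -a) : ValleyWithin s j lo hi := by
  obtain ⟨n, hn, hjn⟩ := hreach
  have hd : firstPassage s j ≤ ⌊hi⌋₊ := (firstPassage_le hjn).trans hn
  have hjd : j ≤ s (firstPassage s j) := le_apply_firstPassage ⟨n, hjn⟩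
  refine ⟨?_, valleyBottom_lt_firstPassage h0 ⟨n, hjn⟩, (Nat.le_floor_iff hhi).1 hd⟩
  obtain ⟨m, hmd, hm⟩ := hdeep _ hd hjd
  have hbottom : s (valleyBottom s j) ≤ -a := (apply_valleyBottom_le hmd).trans hm
  exact (Nat.lt_of_floor_lt (not_le.1 fun hle =>
    (abs_lt.1 (hslow _ hle)).1.not_ge hbottom)).le

lemma eventually_const_mul_rpow_le_rpow (K : ℝ) {p q : ℝ} (hpq : p < q) :
    ∀ᶠ x : ℝ in atTop, K * x ^ p ≤ x ^ q := by
  filter_upwards [(tendsto_rpow_atTop (sub_pos.2 hpq)).eventually_ge_atTop K,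
    eventually_gt_atTop 0] with x hx hx0
  calc K * x ^ p ≤ x ^ (q - p) * x ^ p := by gcongr
    _ = x ^ q := by rw [← Real.rpow_add hx0, sub_add_cancel]

lemma half_le_natFloor {x : ℝ} (hx : 1 ≤ x) : x / 2 ≤ ⌊x⌋₊ := by
  have hfloor : (1 : ℝ) ≤ ⌊x⌋₊ := mod_cast Nat.floor_pos.2 hx
  linarith [Nat.lt_floor_add_one x]

lemma tendsto_natLog_atTop {b : ℕ} (hb : 1 < b) : Tendsto (Nat.log b) atTop atTop :=
  tendsto_atTop_atTop.2 fun k => ⟨b ^ k, fun _ => Nat.le_log_of_pow_le hb⟩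

lemma eventually_valleyWithin_of_dyadic {ε ε' : ℝ} (hs : s 0 = 0) (hε0 : 0 ≤ ε) (hε2 : ε ≤ 2)
    (hεε' : ε < ε')
    (hdyadic : ∀ᶠ k : ℕ in atTop,
      ValleyWithin s (2 ^ k) ((2 ^ k) ^ (2 - ε)) ((2 ^ k) ^ (2 + ε))) :
    ∀ᶠ j : ℕ in atTop, ValleyWithin s j ((j : ℝ) ^ (2 - ε')) ((j : ℝ) ^ (2 + ε')) := by
  have hlog := tendsto_natLog_atTop one_lt_two
  have hlow := eventually_const_mul_rpow_le_rpow (2 ^ (2 - ε)) (sub_lt_sub_left hεε' 2)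
  have hhigh := eventually_const_mul_rpow_le_rpow (2 ^ (2 + ε)) (add_lt_add_right hεε' 2)
  filter_upwards [tendsto_natCast_atTop_atTop.eventually hlow,
    tendsto_natCast_atTop_atTop.eventually hhigh, eventually_gt_atTop 0, hlog.eventually hdyadic,
    ((tendsto_add_atTop_nat 1).comp hlog).eventually hdyadic] with j hlow hhigh hj hk hk'
  have hkj : (2 : ℝ) ^ Nat.log 2 j ≤ j := mod_cast Nat.pow_log_le_self 2 hj.ne'
  have hjk : (j : ℝ) ≤ 2 ^ (Nat.log 2 j + 1) :=
    mod_cast (Nat.lt_pow_succ_log_self one_lt_two j).le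
  obtain ⟨hlo, hlt, hhi⟩ := valleyWithin_between hk hk' hkj hjk (by simpa [hs] using hj)
  refine ⟨le_trans ?_ hlo, hlt, hhi.trans ?_⟩
  · have hpow : (j : ℝ) ≤ 2 * 2 ^ Nat.log 2 j := by rwa [← pow_succ']
    have hscale : (j : ℝ) ^ (2 - ε) ≤ 2 ^ (2 - ε) * (2 ^ Nat.log 2 j) ^ (2 - ε) := by
      rw [← Real.mul_rpow two_pos.le (by positivity)]
      exact Real.rpow_le_rpow j.cast_nonneg hpow (sub_nonneg.2 hε2)
    exact le_of_mul_le_mul_left (hlow.trans hscale) (by positivity)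
  · calc ((2 : ℝ) ^ (Nat.log 2 j + 1)) ^ (2 + ε) ≤ (2 * j) ^ (2 + ε) := by
          rw [pow_succ']
          gcongr
      _ = 2 ^ (2 + ε) * (j : ℝ) ^ (2 + ε) := Real.mul_rpow two_pos.le j.cast_nonneg
      _ ≤ (j : ℝ) ^ (2 + ε') := hhigh

end Valleys

/-! ### Valleys of a centred walk -/

section Scale

variable {Ω : Type*} [mΩ : MeasurableSpace Ω] {μ : Measure Ω} {X : ℕ → Ω → ℝ}

namespace IsCenteredIncrements

variable {v C J t : ℝ}

lemma measureReal_forall_lt_floor_le (hX : IsCenteredIncrements X v C μ) (hv : 0 < v)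
    (hJ : 1 ≤ J) (ht : 1 ≤ t) :
    μ.real {ω | ∀ n ≤ ⌊J ^ 2 * t ^ 4⌋₊, partialSum X n ω < J} ≤
      2 * (1 + C) ^ 2 / v / t + (1 + C) / t := by
  have hC := hX.nonneg_bound
  have hJt : J ≤ J * t := le_mul_of_one_le_right (by positivity) ht
  have hone : 1 ≤ J ^ 2 * t ^ 4 :=
    one_le_mul_of_one_le_of_one_le (one_le_pow₀ hJ) (one_le_pow₀ ht)
  have hN : J ^ 2 * t ^ 4 / 2 ≤ ⌊J ^ 2 * t ^ 4⌋₊ := half_le_natFloor hone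
  refine (hX.measureReal_forall_lt_le (by positivity : 0 < J * t) (by positivity) hv ?_).trans
    (add_le_add ?_ ?_)
  · exact Nat.floor_pos.2 hone
  · rw [max_eq_left hJt]
    calc (J * t + C) ^ 2 / (⌊J ^ 2 * t ^ 4⌋₊ * v)
        ≤ (J * t * (1 + C)) ^ 2 / (J ^ 2 * t ^ 4 / 2 * v) := by
          gcongr
          nlinarith
      _ = 2 * (1 + C) ^ 2 / v / t ^ 2 := by field_simp
      _ ≤ 2 * (1 + C) ^ 2 / v / t := by
          gcongr
          exact le_self_pow₀ ht two_ne_zero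
  · calc (J + C) / (J * t) ≤ J * (1 + C) / (J * t) := by gcongr; nlinarith
      _ = (1 + C) / t := mul_div_mul_left _ _ (by positivity)

lemma measureReal_exists_le_abs_floor_le (hX : IsCenteredIncrements X v C μ) (hJ : 0 < J)
    (ht : 1 ≤ t) :
    μ.real {ω | ∃ n ≤ ⌊J ^ 2 / t ^ 4⌋₊, J / t ≤ |partialSum X n ω|} ≤ C ^ 2 / t := by
  calc μ.real {ω | ∃ n ≤ ⌊J ^ 2 / t ^ 4⌋₊, J / t ≤ |partialSum X n ω|}
      ≤ ⌊J ^ 2 / t ^ 4⌋₊ * C ^ 2 / (J / t) ^ 2 :=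
        hX.measureReal_exists_le_abs_le (by positivity) _
    _ ≤ J ^ 2 / t ^ 4 * C ^ 2 / (J / t) ^ 2 := by
        gcongr
        exact Nat.floor_le (by positivity)
    _ = C ^ 2 / t ^ 2 := by field_simp
    _ ≤ C ^ 2 / t := by
        gcongr
        exact le_self_pow₀ ht two_ne_zero

lemma measureReal_not_valleyWithin_le (hX : IsCenteredIncrements X v C μ) (hv : 0 < v)
    (ht : 1 ≤ t) (htJ : t ≤ J) :
    μ.real {ω | ¬ValleyWithin (fun n => partialSum X n ω) J (J ^ 2 / t ^ 4) (J ^ 2 * t ^ 4)} ≤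
      (2 * (1 + C) ^ 2 / v + 2 * (1 + C) + C ^ 2) / t := by
  have := hX.iIndepFun.isProbabilityMeasure
  have hC := hX.nonneg_bound
  have hJ : 0 < J := by linarith
  let tooSlow := {ω | ∀ n ≤ ⌊J ^ 2 * t ^ 4⌋₊, partialSum X n ω < J}
  let tooFast := {ω | ∃ n ≤ ⌊J ^ 2 / t ^ 4⌋₊, J / t ≤ |partialSum X n ω|}
  let tooShallow := {ω | ∃ n ≤ ⌊J ^ 2 * t ^ 4⌋₊, J ≤ partialSum X n ω ∧
    ∀ m ≤ n, -(J / t) < partialSum X m ω}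
  have hslow := hX.measureReal_forall_lt_floor_le hv (ht.trans htJ) ht
  have hfast := hX.measureReal_exists_le_abs_floor_le hJ ht
  have hshallow : μ.real tooShallow ≤ (1 + C) / t :=
    calc μ.real tooShallow ≤ (J / t + C) / J :=
          hX.measureReal_exists_le_and_forall_lt_le (by positivity) hJ _
      _ = 1 / t + C / J := by field_simp
      _ ≤ 1 / t + C / t := by gcongr
      _ = (1 + C) / t := by ring
  have hsub : {ω | ¬ValleyWithin (fun n => partialSum X n ω) J (J ^ 2 / t ^ 4) (J ^ 2 * t ^ 4)} ⊆
      tooSlow ∪ tooFast ∪ tooShallow := by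
    intro ω hω
    contrapose! hω
    simp only [tooSlow, tooFast, tooShallow, mem_union, mem_ofPred_eq, not_or] at hω
    push Not at hω
    obtain ⟨⟨hreach, hslow⟩, hdeep⟩ := hω
    simp only [mem_ofPred_eq, not_not]
    exact valleyWithin_of_path (by positivity) (by simpa using hJ) hreach hslow hdeep
  calc _ ≤ μ.real (tooSlow ∪ tooFast ∪ tooShallow) := measureReal_mono hsub
    _ ≤ μ.real tooSlow + μ.real tooFast + μ.real tooShallow :=
        (measureReal_union_le _ _).trans (by gcongr; exact measureReal_union_le _ _)
    _ ≤ _ := by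
        refine (add_le_add (add_le_add hslow hfast) hshallow).trans_eq ?_
        ring

end IsCenteredIncrements

lemma ae_eventually_notMem_of_measureReal_le [IsFiniteMeasure μ] {A : ℕ → Set Ω}
    {f : ℕ → ℝ} (hf : Summable f) (hA : ∀ k, μ.real (A k) ≤ f k) :
    ∀ᵐ ω ∂μ, ∀ᶠ k in atTop, ω ∉ A k := by
  refine ae_eventually_notMem (ne_top_of_le_ne_top hf.tsum_ofReal_ne_top ?_)
  exact ENNReal.tsum_le_tsum fun k => by
    rw [← ofReal_measureReal]
    exact ENNReal.ofReal_le_ofReal (hA k)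

lemma summable_const_div_two_pow_rpow (K : ℝ) {η : ℝ} (hη : 0 < η) :
    Summable fun k : ℕ => K / ((2 : ℝ) ^ k) ^ η := by
  have hgeom : Summable fun k : ℕ => ((2 : ℝ) ^ (-η)) ^ k :=
    summable_geometric_of_lt_one (by positivity)
      (Real.rpow_lt_one_of_one_lt_of_neg one_lt_two (neg_lt_zero.2 hη))
  refine (hgeom.mul_left K).congr fun k => ?_
  rw [div_eq_mul_inv, ← Real.rpow_neg (by positivity), ← Real.rpow_natCast, ← Real.rpow_natCast,
    ← Real.rpow_mul two_pos.le, ← Real.rpow_mul two_pos.le, mul_comm (-η)]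

lemma ae_eventually_valleyWithin {v C ε' : ℝ} (hX : IsCenteredIncrements X v C μ)
    (hv : 0 < v) (hε' : 0 < ε') :
    ∀ᵐ ω ∂μ, ∀ᶠ j : ℕ in atTop, ValleyWithin (fun n => partialSum X n ω) j
      ((j : ℝ) ^ (2 - ε')) ((j : ℝ) ^ (2 + ε')) := by
  have := hX.iIndepFun.isProbabilityMeasure
  obtain ⟨ε, hε, hεlt⟩ := exists_between (lt_min hε' two_pos)
  obtain ⟨hεε', hε2⟩ := lt_min_iff.1 hεlt
  have hpow (k : ℕ) : (((2 : ℝ) ^ k) ^ (ε / 4)) ^ 4 = (2 ^ k) ^ ε := by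
    rw [← Real.rpow_mul_natCast (by positivity)]
    norm_num
  have hone (k : ℕ) : (1 : ℝ) ≤ 2 ^ k := one_le_pow₀ one_le_two
  have hdyadic := ae_eventually_notMem_of_measureReal_le
    (summable_const_div_two_pow_rpow _ (by positivity : 0 < ε / 4)) fun k =>
      hX.measureReal_not_valleyWithin_le hv (Real.one_le_rpow (hone k) (by positivity))
        (Real.rpow_le_self_of_one_le (hone k) (by linarith))
  filter_upwards [hdyadic] with ω hω
  refine eventually_valleyWithin_of_dyadic (by simp) hε.le hε2.le hεε' ?_
  filter_upwards [hω] with k hk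
  rw [not_not, hpow] at hk
  rwa [Real.rpow_sub (by positivity), Real.rpow_add (by positivity), Real.rpow_two]

end Scale

/-! ### The potential of the environment -/

section Environment

variable {Ω : Type*} [mΩ : MeasurableSpace Ω] {μ : Measure Ω} {X : ℕ → Ω → ℝ} {v C : ℝ}

lemma IsCenteredIncrements.neg (hX : IsCenteredIncrements X v C μ) :
    IsCenteredIncrements (fun i ω => -X i ω) v C μ where
  measurable i := (hX.measurable i).neg
  iIndepFun := hX.iIndepFun.comp (fun _ x => -x) fun _ => measurable_neg
  integral_eq_zero i := by rw [integral_neg, hX.integral_eq_zero, neg_zero]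
  ae_abs_le i := by simpa only [abs_neg] using hX.ae_abs_le i
  le_integral_sq i := by simpa only [neg_sq] using hX.le_integral_sq i

lemma isCenteredIncrements_of_identDistrib {ι : Type*} {Y : ι → Ω → ℝ} {Z : Ω → ℝ} {e : ℕ → ι}
    (hmeas : ∀ i, Measurable (Y i)) (hind : iIndepFun Y μ) (he : Function.Injective e)
    (hident : ∀ i, IdentDistrib (Y i) Z μ μ) (hmean : ∫ ω, Z ω ∂μ = 0)
    (hbound : ∀ᵐ ω ∂μ, |Z ω| ≤ C) :
    IsCenteredIncrements (fun n => Y (e n)) (variance Z μ) C μ where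
  measurable n := hmeas (e n)
  iIndepFun := hind.precomp he
  integral_eq_zero n := by rw [(hident (e n)).integral_eq, hmean]
  ae_abs_le n := (hident (e n)).symm.ae_snd (p := fun x => |x| ≤ C)
    (measurableSet_le measurable_abs measurable_const) hbound
  le_integral_sq n := by
    rw [variance_of_integral_eq_zero (hident (e n)).aemeasurable_snd hmean]
    exact ((hident (e n)).comp (measurable_id.pow_const 2)).integral_eq.ge

/-- The increment `log ((1 - x) / x)` of the potential at a site where the environment is `x`. -/
noncomputable def logRatio (x : ℝ) : ℝ := Real.log ((1 - x) / x)

lemma measurable_logRatio : Measurable logRatio := by unfold logRatio; fun_prop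

lemma abs_logRatio_le {δ x : ℝ} (hδ : 0 < δ) (hx : δ ≤ x ∧ x ≤ 1 - δ) :
    |logRatio x| ≤ logRatio δ := by
  obtain ⟨hδx, hxδ⟩ := hx
  have hx0 : 0 < x := by linarith
  have hx1 : 0 < 1 - x := by linarith
  have hδ1 : 0 < 1 - δ := by linarith
  refine abs_le'.2 ⟨Real.log_le_log (by positivity) (by gcongr), ?_⟩
  rw [logRatio, ← Real.log_inv, inv_div]
  exact Real.log_le_log (by positivity) (by gcongr; linarith)

lemma sum_range_neg_eq_apply_neg {U y : ℤ → ℝ} (hzero : U 0 = 0)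
    (hneg : ∀ x < 0, U x = -∑ i ∈ Finset.range (-x).toNat, y (x + 1 + i)) (n : ℕ) :
    ∑ i ∈ Finset.range n, -y (-i) = U (-n) := by
  rcases n.eq_zero_or_pos with rfl | hn
  · simp [hzero]
  rw [hneg _ (by omega), neg_neg, Int.toNat_natCast, Finset.sum_neg_distrib,
    ← Finset.sum_range_reflect]
  refine congrArg Neg.neg (Finset.sum_congr rfl fun i hi => congrArg y ?_)
  have := Finset.mem_range.1 hi
  omega

end Environment

/-- Lemma 3.1: for any `ε' > 0`, `P`-almost surely, for all large `j`,
`j^{2−ε'} ≤ b⁺(j) < d⁺(j) ≤ j^{2+ε'}` and `j^{2−ε'} ≤ |b⁻(j)| < |d⁻(j)| ≤ j^{2+ε'}`. -/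
theorem stmt4 {Ω : Type*} [MeasurableSpace Ω] (μ : Measure Ω) [IsProbabilityMeasure μ]
    (env : ℤ → Ω → ℝ) (henv_meas : ∀ i, Measurable (env i))
    (henv_indep : iIndepFun env μ)
    (henv_ident : ∀ i, IdentDistrib (env i) (env 0) μ μ)
    (δ : ℝ) (hδ0 : 0 < δ) (hδ1 : δ < 1 / 2)
    (henv_ell : ∀ i, ∀ᵐ ω ∂μ, δ ≤ env i ω ∧ env i ω ≤ 1 - δ)
    (henv_mean : ∫ ω, Real.log ((1 - env 0 ω) / env 0 ω) ∂μ = 0)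
    (henv_var : 0 < variance (fun ω => Real.log ((1 - env 0 ω) / env 0 ω)) μ)
    (V : ℤ → Ω → ℝ)
    (hV_pos : ∀ (x : ℤ), 0 ≤ x → ∀ ω, V x ω =
      ∑ i ∈ Finset.range x.toNat, Real.log ((1 - env ((i : ℤ) + 1) ω) / env ((i : ℤ) + 1) ω))
    (hV_neg : ∀ (x : ℤ), x < 0 → ∀ ω, V x ω =
      -∑ i ∈ Finset.range (-x).toNat,
        Real.log ((1 - env (x + 1 + (i : ℤ)) ω) / env (x + 1 + (i : ℤ)) ω)) :
    ∀ ε' : ℝ, 0 < ε' → ∀ᵐ ω ∂μ, ∀ᶠ j : ℕ in atTop,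
      ((j : ℝ) ^ (2 - ε' : ℝ) ≤ (bPlus (fun x => V x ω) j : ℝ) ∧
        bPlus (fun x => V x ω) j < dPlus (fun x => V x ω) j ∧
        (dPlus (fun x => V x ω) j : ℝ) ≤ (j : ℝ) ^ (2 + ε' : ℝ)) ∧
      ((j : ℝ) ^ (2 - ε' : ℝ) ≤ (bMinusAbs (fun x => V x ω) j : ℝ) ∧
        bMinusAbs (fun x => V x ω) j < dMinusAbs (fun x => V x ω) j ∧
        (dMinusAbs (fun x => V x ω) j : ℝ) ≤ (j : ℝ) ^ (2 + ε' : ℝ)) := by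
  intro ε' hε'
  let Y : ℤ → Ω → ℝ := fun i ω => logRatio (env i ω)
  have hY {e : ℕ → ℤ} (he : Function.Injective e) :
      IsCenteredIncrements (fun n => Y (e n)) (variance (Y 0) μ) (logRatio δ) μ :=
    isCenteredIncrements_of_identDistrib (fun i => measurable_logRatio.comp (henv_meas i))
      (henv_indep.comp (fun _ => logRatio) fun _ => measurable_logRatio) he
      (fun i => (henv_ident i).comp measurable_logRatio) henv_mean
      ((henv_ell 0).mono fun _ => abs_logRatio_le hδ0)
  have hright := hY (e := fun n => n + 1) fun m n h => by simpa using h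
  have hleft := (hY (e := fun n => -n) fun m n h => by simpa using h).neg
  filter_upwards [ae_eventually_valleyWithin hright henv_var hε',
    ae_eventually_valleyWithin hleft henv_var hε'] with ω hωr hωl
  have hVright (n : ℕ) : partialSum (fun i => Y (i + 1)) n ω = V n ω :=
    (hV_pos n n.cast_nonneg ω).symm
  have hVleft (n : ℕ) : partialSum (fun i ω => -Y (-i) ω) n ω = V (-n) ω :=
    sum_range_neg_eq_apply_neg (U := fun x => V x ω) (y := fun i => Y i ω)
      (by simp [hV_pos]) (fun x hx => hV_neg x hx ω) n
  simp only [hVright] at hωr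
  simp only [hVleft] at hωl
  exact hωr.and hωl
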